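/- Let C₂ ⊊ C₁ ⊆ 𝔽_q^n be linear codes and let I ⊆ [n] with #I ≤ d(C₂^⊥, C₁^⊥) − 1. Then dim(C₁_I) = dim(C₂_I), i.e., C₁_I = C₂_I; hence restriction to I gives no information distinguishing cosets of C₂ in C₁. -/

import Mathlib

open Module

section CodeDefs

variable {F : Type*} [Field F] [Fintype F] [DecidableEq F]

/-- Restriction (puncturing) of a code to the coordinates in `I`. -/
def restrictCode {ι : Type*} (C : Submodule F (ι → F)) (I : Finset ι) :
    Submodule F ({ i // i ∈ I } → F) :=
  C.map (LinearMap.funLeft F F Subtype.val)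

/-- The submodule of vectors supported inside `I`. -/
def zeroOutside {F : Type*} [Field F] {ι : Type*} (I : Finset ι) :
    Submodule F (ι → F) where
  carrier := {c | ∀ j ∉ I, c j = 0}
  add_mem' := by
    intro a b ha hb j hj
    simp [Pi.add_apply, ha j hj, hb j hj]
  zero_mem' := by intro j hj; rfl
  smul_mem' := by
    intro r a ha j hj
    simp [Pi.smul_apply, ha j hj]

/-- Shortening of a code at the coordinates in `I`. -/
def shortenCode {ι : Type*} (C : Submodule F (ι → F)) (I : Finset ι) :
    Submodule F ({ i // i ∈ I } → F) :=
  (C ⊓ zeroOutside I).map (LinearMap.funLeft F F Subtype.val)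

/-- Dual code with respect to the standard bilinear form. -/
def dualCode {ι : Type*} [Fintype ι] (C : Submodule F (ι → F)) :
    Submodule F (ι → F) where
  carrier := {x | ∀ c ∈ C, ∑ i, x i * c i = 0}
  add_mem' := by
    intro a b ha hb c hc
    simp only [Pi.add_apply, add_mul, Finset.sum_add_distrib, ha c hc, hb c hc, add_zero]
  zero_mem' := by intro c hc; simp
  smul_mem' := by
    intro r a ha c hc
    simp only [Pi.smul_apply, smul_eq_mul, mul_assoc, ← Finset.mul_sum, ha c hc, mul_zero]

/-- Relative minimum distance `d(C₁, C₂) = min { wt c : c ∈ C₁ ∖ C₂ }`. -/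
noncomputable def relDist {ι : Type*} [Fintype ι] (C₁ C₂ : Submodule F (ι → F)) : ℕ :=
  sInf {w | ∃ c ∈ C₁, c ∉ C₂ ∧ hammingNorm c = w}

/-- Minimum distance of a code. -/
noncomputable def minDist {ι : Type*} [Fintype ι] (C : Submodule F (ι → F)) : ℕ :=
  sInf {w | ∃ c ∈ C, c ≠ 0 ∧ hammingNorm c = w}

end CodeDefs

/-!
A word of `C₂^⊥` supported on `I` has weight at most `#I < d(C₂^⊥, C₁^⊥)`, so it already lies in
`C₁^⊥`: the two duals have the same shortening at `I`. Since the dual of a restriction is the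
shortening of the dual, the restrictions `C₁_I` and `C₂_I` have the same dual, hence coincide.
-/

section Duality

variable {F : Type*} [Field F] {ι : Type*}

lemma exists_mem_zeroOutside_restrict_eq (I : Finset ι) (y : I → F) :
    ∃ x ∈ zeroOutside I, LinearMap.funLeft F F (Subtype.val : I → ι) x = y :=
  ⟨Function.extend Subtype.val y 0,
    fun _ hj => Function.extend_apply' _ _ _ fun ⟨i, hi⟩ => hj (hi ▸ i.2),
    funext fun i => Subtype.val_injective.extend_apply y 0 i⟩

variable [Fintype ι]

lemma mem_dualCode {C : Submodule F (ι → F)} {x : ι → F} :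
    x ∈ dualCode C ↔ ∀ c ∈ C, x ⬝ᵥ c = 0 :=
  Iff.rfl

lemma dualCode_eq_comap_dualAnnihilator [DecidableEq ι] (C : Submodule F (ι → F)) :
    dualCode C = C.dualAnnihilator.comap (dotProductEquiv F ι).toLinearMap := by
  ext x
  simp only [mem_dualCode, Submodule.mem_comap, Submodule.mem_dualAnnihilator,
    LinearEquiv.coe_coe, dotProductEquiv_apply_apply]

lemma dualCode_le_dualCode_iff {C D : Submodule F (ι → F)} :
    dualCode D ≤ dualCode C ↔ C ≤ D := by
  classical
  rw [dualCode_eq_comap_dualAnnihilator, dualCode_eq_comap_dualAnnihilator,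
    Submodule.comap_le_comap_iff_of_surjective (dotProductEquiv F ι).surjective,
    Subspace.dualAnnihilator_le_dualAnnihilator_iff]

lemma dotProduct_restrict_of_mem_zeroOutside {I : Finset ι} {x : ι → F}
    (hx : x ∈ zeroOutside I) (c : ι → F) :
    LinearMap.funLeft F F (Subtype.val : I → ι) x ⬝ᵥ LinearMap.funLeft F F Subtype.val c =
      x ⬝ᵥ c :=
  Fintype.sum_of_injective Subtype.val Subtype.val_injective _ _
    (fun i hi => by rw [hx i (by simpa using hi), zero_mul]) fun _ => rfl

lemma dualCode_restrictCode (C : Submodule F (ι → F)) (I : Finset ι) :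
    dualCode (restrictCode C I) = shortenCode (dualCode C) I := by
  ext y
  constructor
  · intro hy
    obtain ⟨x, hx, rfl⟩ := exists_mem_zeroOutside_restrict_eq I y
    refine Submodule.mem_map_of_mem ⟨mem_dualCode.2 fun c hc => ?_, hx⟩
    rw [← dotProduct_restrict_of_mem_zeroOutside hx]
    exact hy _ (Submodule.mem_map_of_mem hc)
  · rintro ⟨x, ⟨hxC, hx⟩, rfl⟩ _ ⟨c, hc, rfl⟩
    exact (dotProduct_restrict_of_mem_zeroOutside hx c).trans (hxC c hc)

lemma restrictCode_le_restrictCode_of_dualCode_inf_le {C D : Submodule F (ι → F)} {I : Finset ι}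
    (h : dualCode D ⊓ zeroOutside I ≤ dualCode C) : restrictCode C I ≤ restrictCode D I := by
  rw [← dualCode_le_dualCode_iff, dualCode_restrictCode, dualCode_restrictCode]
  exact Submodule.map_mono (le_inf h inf_le_right)

end Duality

section Weight

variable {F : Type*} [Field F] [DecidableEq F] {ι : Type*} [Fintype ι]

lemma hammingNorm_le_card_of_mem_zeroOutside {I : Finset ι} {x : ι → F}
    (hx : x ∈ zeroOutside I) : hammingNorm x ≤ I.card :=
  Finset.card_le_card fun i hi => by
    by_contra hiI
    exact (Finset.mem_filter.1 hi).2 (hx i hiI)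

lemma inf_zeroOutside_le_of_card_le_relDist_sub_one {D₁ D₂ : Submodule F (ι → F)} {I : Finset ι}
    (hI : I.card ≤ relDist D₁ D₂ - 1) : D₁ ⊓ zeroOutside I ≤ D₂ := by
  rintro x ⟨hx₁, hxI⟩
  by_contra hx₂
  have relDist_le : relDist D₁ D₂ ≤ hammingNorm x := Nat.sInf_le ⟨x, hx₁, hx₂, rfl⟩
  have weight_le : hammingNorm x ≤ I.card := hammingNorm_le_card_of_mem_zeroOutside hxI
  have weight_pos : 0 < hammingNorm x :=
    hammingNorm_pos_iff.2 fun hx₀ => hx₂ (hx₀ ▸ D₂.zero_mem)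
  -- Positivity of the weight covers `relDist D₁ D₂ = 0`, where the subtraction in `hI` truncates.
  omega

end Weight

theorem privacy_restrict_eq_general
    {F : Type*} [Field F] [DecidableEq F] {ι : Type*} [Fintype ι]
    {C₂ C₁ : Submodule F (ι → F)} (h : C₂ ≤ C₁) {I : Finset ι}
    (hI : I.card ≤ relDist (dualCode C₂) (dualCode C₁) - 1) :
    restrictCode C₁ I = restrictCode C₂ I :=
  le_antisymm
    (restrictCode_le_restrictCode_of_dualCode_inf_le
      (inf_zeroOutside_le_of_card_le_relDist_sub_one hI))
    (Submodule.map_mono h)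

/-- If `#I ≤ d(C₂^⊥, C₁^⊥) − 1` then `C₁_I = C₂_I`:
restriction to `I` gives no information distinguishing cosets of `C₂` in `C₁`. -/
theorem privacy_restrict_eq
    {F : Type*} [Field F] [Fintype F] [DecidableEq F] {n : ℕ}
    (C₂ C₁ : Submodule F (Fin n → F)) (h : C₂ < C₁) (I : Finset (Fin n))
    (hI : I.card ≤ relDist (dualCode C₂) (dualCode C₁) - 1) :
    finrank F (restrictCode C₁ I) = finrank F (restrictCode C₂ I)
    ∧ restrictCode C₁ I = restrictCode C₂ I := by
  have restrict_eq := privacy_restrict_eq_general h.le hI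
  exact ⟨by rw [restrict_eq], restrict_eq⟩
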